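/- Let k ≥ 1 be an integer and let G be a k-stepwise irregular graph on n vertices with at least one edge and maximum degree Δ = Δ(G). If G has exactly two distinct vertex degrees and gcd(Δ, k) = 1, then 2Δ − k divides n. -/

import Mathlib

open SimpleGraph Finset

/-- A graph `G` is `k`-stepwise irregular if the degrees of every pair of adjacent
vertices differ by exactly `k`. -/
def IsSI {V : Type*} [Fintype V] (G : SimpleGraph V) [DecidableRel G.Adj] (k : ℕ) : Prop :=
  ∀ ⦃u v : V⦄, G.Adj u v → |(G.degree u : ℤ) - (G.degree v : ℤ)| = (k : ℤ)

/-!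
A neighbour of a vertex of maximum degree `Δ` has degree `Δ - k`, so the two degrees are `D = Δ` and
`d = Δ - k`. Adjacent vertices have different degrees, so the two degree classes, of sizes `a` and
`b`, form a bipartition, and counting edges from either side gives `a * D = b * d`. Hence
`D * (a + b) = b * (D + d)` and `d * (a + b) = a * (D + d)`, so `D + d = 2Δ - k` divides
`gcd(D, d) * n = gcd(Δ, k) * n`.
-/

theorem add_dvd_gcd_mul_add {a b D d : ℕ} (h : a * D = b * d) :
    D + d ∣ D.gcd d * (a + b) := by
  have hD : D + d ∣ D * (a + b) := ⟨b, by linarith⟩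
  have hd : D + d ∣ d * (a + b) := ⟨a, by linarith⟩
  rw [← Nat.gcd_mul_right]
  exact Nat.dvd_gcd hD hd

theorem eq_or_eq_of_mem_of_card_le_two {α : Type*} {s : Finset α} {a b c : α} (hs : #s ≤ 2)
    (ha : a ∈ s) (hb : b ∈ s) (hab : a ≠ b) (hc : c ∈ s) : c = a ∨ c = b := by
  by_contra! h
  exact hs.not_gt (two_lt_card.2 ⟨a, ha, b, hb, c, hc, hab, h.1.symm, h.2.symm⟩)

section BipartiteDegrees

variable {V : Type*} {G : SimpleGraph V} {D d : ℕ}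

theorem add_dvd_gcd_mul_card_add_card_of_isBipartiteWith [G.LocallyFinite] {s t : Finset V}
    (h : G.IsBipartiteWith s t) (hs : ∀ v ∈ s, G.degree v = D) (ht : ∀ v ∈ t, G.degree v = d) :
    D + d ∣ D.gcd d * (#s + #t) :=
  add_dvd_gcd_mul_add <| calc
    #s * D = ∑ v ∈ s, G.degree v := (sum_const_nat hs).symm
    _ = ∑ v ∈ t, G.degree v := isBipartiteWith_sum_degrees_eq h
    _ = #t * d := sum_const_nat ht

theorem add_dvd_gcd_mul_card_of_degree_ne [Fintype V] [DecidableRel G.Adj]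
    (hdeg : ∀ v, G.degree v = D ∨ G.degree v = d)
    (hne : ∀ ⦃u v⦄, G.Adj u v → G.degree u ≠ G.degree v) :
    D + d ∣ D.gcd d * Fintype.card V := by
  have hbip : G.IsBipartiteWith ({v | G.degree v = D} : Finset V)
      ({v | ¬G.degree v = D} : Finset V) := by
    refine ⟨disjoint_coe.2 (disjoint_filter_filter_not _ _ _), fun u v huv => ?_⟩
    have huv_ne := hne huv
    have hu := hdeg u
    have hv := hdeg v
    simp only [coe_filter_univ, Set.mem_ofPred_eq]
    omega
  rw [← card_univ, ← card_filter_add_card_filter_not (s := univ) fun v => G.degree v = D]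
  refine add_dvd_gcd_mul_card_add_card_of_isBipartiteWith hbip (fun v hv => ?_) fun v hv => ?_
  · exact (mem_filter_univ v).1 hv
  · exact (hdeg v).resolve_left ((mem_filter_univ v).1 hv)

end BipartiteDegrees

namespace IsSI

variable {V : Type*} [Fintype V] {G : SimpleGraph V} [DecidableRel G.Adj] {k : ℕ} {u v : V}

theorem degree_eq_add_or (hSI : IsSI G k) (huv : G.Adj u v) :
    G.degree u = G.degree v + k ∨ G.degree v = G.degree u + k := by
  have h := hSI huv
  rw [abs_eq k.cast_nonneg] at h
  omega

theorem degree_ne (hSI : IsSI G k) (hk : 1 ≤ k) (huv : G.Adj u v) :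
    G.degree u ≠ G.degree v := by
  have h := hSI.degree_eq_add_or huv
  omega

theorem exists_adj_maxDegree_eq_degree_and_eq_degree_add (hSI : IsSI G k)
    (huv : G.degree u ≠ G.degree v) :
    ∃ x y, G.Adj x y ∧ G.maxDegree = G.degree x ∧ G.maxDegree = G.degree y + k := by
  have : Nonempty V := ⟨u⟩
  obtain ⟨x, hx⟩ := G.exists_maximal_degree_vertex
  have hu := G.degree_le_maxDegree u
  have hv := G.degree_le_maxDegree v
  obtain ⟨y, hxy⟩ := (G.degree_pos_iff_exists_adj x).1 (by omega)
  have hy := G.degree_le_maxDegree y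
  have hadj := hSI.degree_eq_add_or hxy
  exact ⟨x, y, hxy, by omega⟩

end IsSI

theorem ksi_dvd_card_general {V : Type*} [Fintype V] (G : SimpleGraph V) [DecidableRel G.Adj]
    (k : ℕ) (hk : 1 ≤ k) (hSI : IsSI G k)
    (hdeg : #(univ.image fun v => G.degree v) = 2) :
    (2 * (G.maxDegree : ℤ) - k) ∣ (G.maxDegree.gcd k * Fintype.card V : ℤ) := by
  have hmem (v : V) : G.degree v ∈ univ.image fun v => G.degree v :=
    mem_image_of_mem _ (mem_univ v)
  obtain ⟨u, v, huv⟩ : ∃ u v, G.degree u ≠ G.degree v := by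
    have hlt : 1 < #(univ.image fun v => G.degree v) := by omega
    simpa using one_lt_card.1 hlt
  obtain ⟨x, y, hxy, hx, hy⟩ := hSI.exists_adj_maxDegree_eq_degree_and_eq_degree_add huv
  have hdvd : G.degree x + G.degree y ∣ (G.degree x).gcd (G.degree y) * Fintype.card V :=
    add_dvd_gcd_mul_card_of_degree_ne
      (fun w => eq_or_eq_of_mem_of_card_le_two hdeg.le (hmem x) (hmem y)
        (hSI.degree_ne hk hxy) (hmem w))
      fun _ _ => hSI.degree_ne hk
  have hsum : 2 * (G.maxDegree : ℤ) - k = (G.degree x + G.degree y : ℕ) := by omega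
  have hgcd : G.maxDegree.gcd k = (G.degree x).gcd (G.degree y) := by
    rw [← hx, hy, Nat.gcd_add_self_left, Nat.gcd_self_add_left, Nat.gcd_comm]
  rw [hsum, hgcd]
  exact_mod_cast hdvd

/-- If a `k`-stepwise irregular graph with an edge has exactly two distinct degrees
and `gcd(Δ, k) = 1`, then `2Δ − k` divides `n`. -/
theorem ksi_dvd_card {V : Type*} [Fintype V] (G : SimpleGraph V) [DecidableRel G.Adj]
    (k : ℕ) (hk : 1 ≤ k) (hSI : IsSI G k) (he : ∃ u v, G.Adj u v)
    (hdeg : (Finset.univ.image fun v => G.degree v).card = 2)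
    (hgcd : Nat.gcd G.maxDegree k = 1) :
    (2 * (G.maxDegree : ℤ) - k) ∣ (Fintype.card V : ℤ) := by
  simpa [hgcd] using ksi_dvd_card_general G k hk hSI hdeg
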